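/- arXiv:2209.02456 — 3 statements merged into one kernel-verified Lean document; each statement's English description precedes it below -/
import Mathlib

section
/- Let ℍ be a non-degenerate hypercomplex algebra of dimension n+1, let N ≥ 1, and let K ⊆ ℍ^N be a compact set. Let ψ : ℝ → ℝ be a continuous function with lim_{λ→−∞} ψ(λ) = 0 that is discriminatory for every compact subset of ℝ^{(n+1)N}. Then for every continuous function f : K → ℍ and every ε > 0 there exist M ∈ ℕ, coefficients α_1,…,α_M ∈ ℍ, biases θ_1,…,θ_M ∈ ℍ, and weight vectors y_1,…,y_M ∈ ℍ^N such that |f(x) − Σ_{i=1}^M α_i ψ_ℍ(Σ_{k=1}^N y_{ik} x_k + θ_i)| < ε for all x ∈ K, where all products α_i·(…) and y_{ik} x_k are taken in ℍ and |·| is the Euclidean norm on ℍ ≅ ℝ^{n+1}. -/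
/-!
Ridge functions `x ↦ ψ (ℓ x + t)` span a dense subspace of `C(K, ℝ)`: by Hahn–Banach it suffices
that a functional vanishing on them is zero; it is a difference of two positive functionals, hence
by Riesz–Markov–Kakutani the integral against a signed measure, which is zero because `ψ` is
discriminatory.

Since `B_0` is non-degenerate, the weights `y` can be chosen so that the real part of `∑ₖ yₖ xₖ` is
any prescribed functional `ℓ x`. When the biases of the imaginary coordinates tend to `-∞`, those
coordinates of the activation tend to `0` uniformly on `K`, so the neuron with coefficient `a`
tends to `ψ (ℓ x + t) a`. The closure of the space of networks therefore contains every
`x ↦ g x • a` with `g ∈ C(K, ℝ)`, and these span `C(K, ℍ)`.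
-/

open Matrix MeasureTheory

/-- A function `ψ : ℝ → ℝ` is discriminatory for `K ⊆ ℝ^M` if for every finite
signed regular Borel measure `μ` on `K`, `∫_K ψ(yᵀx + θ) dμ(x) = 0` for all
`y ∈ ℝ^M` and `θ ∈ ℝ` implies `μ = 0`. The integral against the signed measure
is expressed via its Jordan decomposition. -/
def Discriminatory {M : ℕ} (ψ : ℝ → ℝ) (K : Set (Fin M → ℝ)) : Prop :=
  ∀ μ : SignedMeasure K,
    μ.toJordanDecomposition.posPart.Regular →
    μ.toJordanDecomposition.negPart.Regular →
    (∀ (y : Fin M → ℝ) (θ : ℝ),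
      (∫ x : K, ψ (y ⬝ᵥ (x : Fin M → ℝ) + θ) ∂μ.toJordanDecomposition.posPart) -
      (∫ x : K, ψ (y ⬝ᵥ (x : Fin M → ℝ) + θ) ∂μ.toJordanDecomposition.negPart) = 0) →
    μ = 0

/-- The product in the hypercomplex algebra of dimension `n+1` with structure
constants `p`: `(xy)_0 = x_0 y_0 + ∑_{α,β} x_α y_β p_{αβ,0}` and
`(xy)_j = x_0 y_j + x_j y_0 + ∑_{α,β} x_α y_β p_{αβ,j}` for `j ≠ 0`. -/
def hyperMul {n : ℕ} (p : Fin n → Fin n → Fin (n + 1) → ℝ)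
    (x y : Fin (n + 1) → ℝ) : Fin (n + 1) → ℝ := fun j =>
  x 0 * y j + (if j = 0 then 0 else x j * y 0) +
    ∑ α : Fin n, ∑ β : Fin n, x α.succ * y β.succ * p α β j

/-- The matrix of the coordinate bilinear form `B_j(x,y) = (xy)_j` in the
canonical basis. -/
def hyperBilinMatrix {n : ℕ} (p : Fin n → Fin n → Fin (n + 1) → ℝ)
    (j : Fin (n + 1)) : Matrix (Fin (n + 1)) (Fin (n + 1)) ℝ :=
  Matrix.of fun α β =>
    if hα : α = 0 then (if β = j then 1 else 0)
    else if hβ : β = 0 then (if α = j then 1 else 0)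
    else p (α.pred hα) (β.pred hβ) j

/-- The split activation function `ψ_ℍ` applies `ψ` coordinatewise. -/
def splitActivation {n : ℕ} (ψ : ℝ → ℝ) (x : Fin (n + 1) → ℝ) :
    Fin (n + 1) → ℝ := fun j => ψ (x j)

/-- The Euclidean norm (absolute value) of a hypercomplex number. -/
noncomputable def hyperAbs {n : ℕ} (x : Fin (n + 1) → ℝ) : ℝ :=
  Real.sqrt (∑ j : Fin (n + 1), x j ^ 2)

section NormedLattice

variable {E : Type*} [NormedAddCommGroup E] [Lattice E]

lemma norm_posPart_smul [NormedSpace ℝ E] [PosSMulMono ℝ E] {c : ℝ} (hc : 0 < c) (a : E) :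
    ‖(c • a)⁺‖ = c * ‖a⁺‖ := by
  have hsup : c • (a ⊔ 0) = c • a ⊔ c • (0 : E) := (OrderIso.smulRight hc).map_sup a 0
  rw [posPart_def, posPart_def, ← smul_zero c, ← hsup, smul_zero, norm_smul,
    Real.norm_of_nonneg hc.le]

variable [IsOrderedAddMonoid E]

lemma norm_le_norm_posPart_add_norm_posPart_neg (a : E) : ‖a‖ ≤ ‖a⁺‖ + ‖(-a)⁺‖ :=
  calc ‖a‖ = ‖a⁺ - a⁻‖ := by rw [posPart_sub_negPart]
    _ ≤ ‖a⁺‖ + ‖(-a)⁺‖ := by rw [posPart_neg]; exact norm_sub_le _ _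

variable [HasSolidNorm E]

lemma norm_posPart_add_le (a b : E) : ‖(a + b)⁺‖ ≤ ‖a⁺‖ + ‖b⁺‖ := by
  have hle : (a + b)⁺ ≤ a⁺ + b⁺ :=
    sup_le (add_le_add (le_posPart a) (le_posPart b))
      (add_nonneg (posPart_nonneg a) (posPart_nonneg b))
  calc ‖(a + b)⁺‖ ≤ ‖a⁺ + b⁺‖ := norm_le_norm_of_abs_le_abs <| by
        rwa [abs_of_nonneg (posPart_nonneg _), abs_of_nonneg ((posPart_nonneg _).trans hle)]
    _ ≤ ‖a⁺‖ + ‖b⁺‖ := norm_add_le _ _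

variable [NormedSpace ℝ E] [PosSMulMono ℝ E]

lemma exists_positiveLinearMap_sub_eq (Λ : StrongDual ℝ E) :
    ∃ P N : E →ₚ[ℝ] ℝ, ∀ a, Λ a = P a - N a := by
  -- Extend `(a, -a) ↦ Λ a` from the antidiagonal to some `Φ : (a, b) ↦ P a + N b` below a
  -- sublinear map that vanishes on nonpositive pairs; this forces `Φ` to be positive.
  let antidiagonal : E × E →ₗ.[ℝ] ℝ :=
    ⟨(-LinearMap.id : E →ₗ[ℝ] E).graph,
      Λ.toLinearMap ∘ₗ LinearMap.fst ℝ E E ∘ₗ Submodule.subtype _⟩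
  obtain ⟨Φ, hΦ, hΦle⟩ := exists_extension_of_le_sublinear antidiagonal
    (fun q => ‖Λ‖ * (‖q.1⁺‖ + ‖q.2⁺‖))
    (fun c hc q => by
      simp only [Prod.smul_fst, Prod.smul_snd, norm_posPart_smul hc]
      ring)
    (fun q r => by
      rw [← mul_add, add_add_add_comm]
      exact mul_le_mul_of_nonneg_left (add_le_add (norm_posPart_add_le q.1 r.1)
        (norm_posPart_add_le q.2 r.2)) (norm_nonneg Λ))
    (by
      rintro ⟨⟨a, b⟩, hab : b = -a⟩
      subst hab
      calc Λ a ≤ ‖Λ‖ * ‖a‖ := (le_abs_self _).trans (Λ.le_opNorm a)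
        _ ≤ ‖Λ‖ * (‖a⁺‖ + ‖(-a)⁺‖) := by
          gcongr
          exact norm_le_norm_posPart_add_norm_posPart_neg a)
  have hΦ_nonneg (q : E × E) (hq : 0 ≤ q) : 0 ≤ Φ q := by
    have h₁ : (-q.1)⁺ = 0 := posPart_eq_zero.2 (neg_nonpos.2 hq.1)
    have h₂ : (-q.2)⁺ = 0 := posPart_eq_zero.2 (neg_nonpos.2 hq.2)
    simpa [h₁, h₂] using hΦle (-q)
  refine ⟨.mk₀ (Φ ∘ₗ LinearMap.inl ℝ E E) fun a ha => hΦ_nonneg _ ⟨ha, le_rfl⟩,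
    .mk₀ (Φ ∘ₗ LinearMap.inr ℝ E E) fun a ha => hΦ_nonneg _ ⟨le_rfl, ha⟩, fun a => ?_⟩
  calc Λ a = Φ (a, -a) := (hΦ ⟨(a, -a), rfl⟩).symm
    _ = Φ (a, 0) - Φ (0, a) := by simp [← map_sub]

end NormedLattice

instance instHasSolidNormContinuousMap {X E : Type*} [TopologicalSpace X] [CompactSpace X]
    [NormedAddCommGroup E] [Lattice E] [HasSolidNorm E] [IsOrderedAddMonoid E] :
    HasSolidNorm C(X, E) where
  solid _ g hfg := (ContinuousMap.norm_le _ (norm_nonneg _)).2 fun x =>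
    (norm_le_norm_of_abs_le_abs (hfg x)).trans (g.norm_coe_le_norm x)

section Riesz

variable {X : Type*} [TopologicalSpace X] [CompactSpace X] [T2Space X] [MeasurableSpace X]
  [BorelSpace X]

lemma exists_measure_integral_eq (Λ : C(X, ℝ) →ₚ[ℝ] ℝ) :
    ∃ μ : Measure X, IsFiniteMeasure μ ∧ μ.Regular ∧ ∀ f : C(X, ℝ), ∫ x, f x ∂μ = Λ f := by
  let Λc : CompactlySupportedContinuousMap X ℝ →ₚ[ℝ] ℝ :=
    .mk₀
      { toFun := fun f => Λ f
        map_add' := fun f g => map_add Λ (f : C(X, ℝ)) g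
        map_smul' := fun c f => map_smul Λ c (f : C(X, ℝ)) }
      fun f hf => map_nonneg Λ hf
  refine ⟨RealRMK.rieszMeasure Λc, inferInstance, inferInstance, fun f => ?_⟩
  exact RealRMK.integral_rieszMeasure Λc (CompactlySupportedContinuousMap.continuousMapEquiv f)

lemma exists_measure_integral_sub_integral_eq (Λ : StrongDual ℝ C(X, ℝ)) :
    ∃ μ ν : Measure X, IsFiniteMeasure μ ∧ IsFiniteMeasure ν ∧ μ.Regular ∧ ν.Regular ∧
      ∀ f : C(X, ℝ), Λ f = ∫ x, f x ∂μ - ∫ x, f x ∂ν := by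
  obtain ⟨P, N, hPN⟩ := exists_positiveLinearMap_sub_eq Λ
  obtain ⟨μ, hμ, hμreg, hμint⟩ := exists_measure_integral_eq P
  obtain ⟨ν, hν, hνreg, hνint⟩ := exists_measure_integral_eq N
  exact ⟨μ, ν, hμ, hν, hμreg, hνreg, fun f => by rw [hPN, hμint, hνint]⟩

end Riesz

section Density

variable {E : Type*} [AddCommGroup E] [Module ℝ E] [TopologicalSpace E] [IsTopologicalAddGroup E]
  [ContinuousSMul ℝ E] [LocallyConvexSpace ℝ E]

lemma topologicalClosure_eq_top_of_forall_dual {V : Submodule ℝ E}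
    (hV : ∀ Λ : StrongDual ℝ E, (∀ v ∈ V, Λ v = 0) → Λ = 0) : V.topologicalClosure = ⊤ := by
  by_contra hne
  obtain ⟨x, -, hx⟩ := SetLike.exists_of_lt (lt_top_iff_ne_top.2 hne)
  obtain ⟨Λ, u, hΛu, hux⟩ := geometric_hahn_banach_closed_point
    V.topologicalClosure.convex V.isClosed_topologicalClosure hx
  have hΛ : Λ = 0 := hV Λ fun v hv => by
    by_contra hΛv
    have hlt := hΛu ((u / Λ v) • v) (V.le_topologicalClosure (V.smul_mem _ hv))
    exact hlt.ne (by simp [hΛv])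
  have hu : 0 < u := by simpa using hΛu 0 (zero_mem _)
  exact hu.not_gt (by simpa [hΛ] using hux)

lemma span_topologicalClosure_eq_top_of_integral_eq {X : Type*} [TopologicalSpace X]
    [CompactSpace X] [T2Space X] [MeasurableSpace X] [BorelSpace X] {S : Set C(X, ℝ)}
    (hS : ∀ (μ ν : Measure X) [IsFiniteMeasure μ] [IsFiniteMeasure ν] [μ.Regular] [ν.Regular],
      (∀ f ∈ S, ∫ x, f x ∂μ = ∫ x, f x ∂ν) → μ = ν) :
    (Submodule.span ℝ S).topologicalClosure = ⊤ := by
  refine topologicalClosure_eq_top_of_forall_dual fun Λ hΛ => ?_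
  obtain ⟨μ, ν, _, _, _, _, hμν⟩ := exists_measure_integral_sub_integral_eq Λ
  have hint (f) (hf : f ∈ S) : ∫ x, f x ∂μ = ∫ x, f x ∂ν :=
    sub_eq_zero.1 <| (hμν f).symm.trans (hΛ f (Submodule.subset_span hf))
  ext f
  rw [hμν, hS μ ν hint, sub_self, _root_.zero_apply]

end Density

section Jordan

variable {X : Type*} [MeasurableSpace X] {E : Type*} [NormedAddCommGroup E] [NormedSpace ℝ E]

lemma integral_sub_integral_sub_comm (μ ν : Measure X) [IsFiniteMeasure μ] [IsFiniteMeasure ν]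
    {f : X → E} (hμ : Integrable f μ) (hν : Integrable f ν) :
    ∫ x, f x ∂(μ - ν) - ∫ x, f x ∂(ν - μ) = ∫ x, f x ∂μ - ∫ x, f x ∂ν := by
  have hμν : μ + (ν - μ) = μ - ν + ν := by
    rw [← Measure.toSignedMeasure_eq_toSignedMeasure_iff, Measure.toSignedMeasure_add,
      Measure.toSignedMeasure_add, ← sub_eq_sub_iff_add_eq_add,
      ← Measure.sub_toSignedMeasure_eq_toSignedMeasure_sub]
  rw [eq_comm, sub_eq_sub_iff_add_eq_add,
    ← integral_add_measure hμ (hν.mono_measure Measure.sub_le), hμν,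
    integral_add_measure (hμ.mono_measure Measure.sub_le) hν]

end Jordan

section Ridge

variable {E : Type*} [AddCommGroup E] [Module ℝ E] [TopologicalSpace E]

/-- The ridge function `x ↦ ψ (ℓ x + t)` on `K`. -/
def ridge (ψ : C(ℝ, ℝ)) (K : Set E) (ℓ : StrongDual ℝ E) (t : ℝ) : C(K, ℝ) where
  toFun x := ψ (ℓ x + t)

/-- The linear combinations of ridge functions on `K`. -/
def ridgeSpan (ψ : C(ℝ, ℝ)) (K : Set E) : Submodule ℝ C(K, ℝ) :=
  Submodule.span ℝ (Set.range (Function.uncurry (ridge ψ K)))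

lemma tendsto_comp_add_const_atBot {X Y : Type*} [TopologicalSpace X] [CompactSpace X]
    [UniformSpace Y] {ψ : C(ℝ, Y)} {c : Y} (hψ : Filter.Tendsto ψ Filter.atBot (nhds c))
    (g : C(X, ℝ)) :
    Filter.Tendsto (fun s => ψ.comp (g + .const X s)) Filter.atBot (nhds (.const X c)) := by
  rw [ContinuousMap.tendsto_iff_tendstoUniformly]
  intro u hu
  obtain ⟨r, hr⟩ := Filter.eventually_atBot.1 (Uniform.tendsto_nhds_right.1 hψ hu)
  filter_upwards [Filter.eventually_le_atBot (r - ‖g‖)] with s hs x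
  exact hr _ (by simpa using add_le_add ((le_abs_self _).trans (g.norm_coe_le_norm x)) hs)

lemma tendsto_ridge_atBot {ψ : C(ℝ, ℝ)} (hψ : Filter.Tendsto ψ Filter.atBot (nhds 0))
    {K : Set E} (hK : IsCompact K) (ℓ : StrongDual ℝ E) :
    Filter.Tendsto (ridge ψ K ℓ) Filter.atBot (nhds 0) :=
  haveI := isCompact_iff_compactSpace.1 hK
  tendsto_comp_add_const_atBot hψ ((ℓ : C(E, ℝ)).restrict K)

end Ridge

namespace Discriminatory

variable {m : ℕ} {ψ : C(ℝ, ℝ)}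

lemma measure_eq_of_integral_ridge_eq {K : Set (Fin m → ℝ)} (hK : IsCompact K)
    (hψ : Discriminatory ψ K) (μ ν : Measure K) [IsFiniteMeasure μ] [IsFiniteMeasure ν]
    [μ.Regular] [ν.Regular]
    (hμν : ∀ ℓ t, ∫ x, ridge ψ K ℓ t x ∂μ = ∫ x, ridge ψ K ℓ t x ∂ν) : μ = ν := by
  have := isCompact_iff_compactSpace.1 hK
  have hint (g : C(K, ℝ)) (ρ : Measure K) [IsFiniteMeasure ρ] : Integrable g ρ :=
    g.continuous.integrable_of_hasCompactSupport (.of_compactSpace g)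
  rw [← Measure.toSignedMeasure_eq_toSignedMeasure_iff, ← sub_eq_zero]
  apply hψ <;> rw [Measure.toJordanDecomposition_toSignedMeasure_sub]
  · exact inferInstanceAs (μ - ν).Regular
  · exact inferInstanceAs (ν - μ).Regular
  intro y θ
  let ridge_yθ := ridge ψ K (dotProductEquiv ℝ (Fin m) y).toContinuousLinearMap θ
  calc ∫ x, ridge_yθ x ∂(μ - ν) - ∫ x, ridge_yθ x ∂(ν - μ)
      = ∫ x, ridge_yθ x ∂μ - ∫ x, ridge_yθ x ∂ν :=
        integral_sub_integral_sub_comm μ ν (hint _ μ) (hint _ ν)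
    _ = 0 := sub_eq_zero.2 (hμν _ _)

lemma ridgeSpan_topologicalClosure_eq_top {K : Set (Fin m → ℝ)} (hK : IsCompact K)
    (hψ : Discriminatory ψ K) : (ridgeSpan ψ K).topologicalClosure = ⊤ :=
  have := isCompact_iff_compactSpace.1 hK
  span_topologicalClosure_eq_top_of_integral_eq fun μ ν _ _ _ _ hμν =>
    hψ.measure_eq_of_integral_ridge_eq hK μ ν fun ℓ t => hμν _ ⟨(ℓ, t), rfl⟩

lemma ridgeSpan_topologicalClosure_eq_top_of_image {E : Type*} [AddCommGroup E] [Module ℝ E]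
    [TopologicalSpace E] {K : Set E} (hK : IsCompact K) (e : E ≃L[ℝ] (Fin m → ℝ))
    (hψ : Discriminatory ψ (e '' K)) : (ridgeSpan ψ K).topologicalClosure = ⊤ := by
  let h : K ≃ₜ e '' K := e.toHomeomorph.image K
  let pullback : C(e '' K, ℝ) →L[ℝ] C(K, ℝ) := ContinuousMap.compCLM ℝ ℝ h
  have hpullback : Function.Surjective pullback := fun g =>
    ⟨g.comp h.symm, by ext x; simp [pullback]⟩
  have hdense := hpullback.denseRange.topologicalClosure_map_submodule
    (hψ.ridgeSpan_topologicalClosure_eq_top (hK.image e.continuous))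
  refine top_unique (hdense.ge.trans (Submodule.topologicalClosure_mono ?_))
  rw [ridgeSpan, Submodule.map_span, Submodule.span_le]
  rintro _ ⟨_, ⟨⟨ℓ, t⟩, rfl⟩, rfl⟩
  exact Submodule.subset_span ⟨(ℓ ∘L e.toContinuousLinearMap, t), rfl⟩

end Discriminatory

section HypercomplexProduct

variable {n : ℕ} (p : Fin n → Fin n → Fin (n + 1) → ℝ)

lemma hyperMul_eq_dotProduct_mulVec (x y : Fin (n + 1) → ℝ) (j : Fin (n + 1)) :
    hyperMul p x y j = x ⬝ᵥ hyperBilinMatrix p j *ᵥ y := by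
  have hrow₀ : (hyperBilinMatrix p j *ᵥ y) 0 = y j := by
    simp [mulVec, dotProduct, hyperBilinMatrix]
  have hrow (α : Fin n) : (hyperBilinMatrix p j *ᵥ y) α.succ =
      (if α.succ = j then y 0 else 0) + ∑ β, y β.succ * p α β j := by
    simp [mulVec, dotProduct, hyperBilinMatrix, Fin.sum_univ_succ, mul_comm]
  have himag : ∑ α : Fin n, x α.succ * (if α.succ = j then y 0 else 0) =
      if j = 0 then 0 else x j * y 0 := by
    cases j using Fin.cases <;> simp [Fin.succ_ne_zero, eq_comm]
  simp only [hyperMul, dotProduct, Fin.sum_univ_succ (n := n), hrow₀, hrow, mul_add,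
    Finset.sum_add_distrib, himag, Finset.mul_sum, mul_assoc, add_assoc]

/-- The product of `ℍ` as a bilinear map. -/
def hyperMulBilin : (Fin (n + 1) → ℝ) →ₗ[ℝ] (Fin (n + 1) → ℝ) →ₗ[ℝ] (Fin (n + 1) → ℝ) :=
  .mk₂ ℝ (hyperMul p)
    (fun x x' y => by ext; simp [hyperMul_eq_dotProduct_mulVec])
    (fun c x y => by ext; simp [hyperMul_eq_dotProduct_mulVec])
    (fun x y y' => by ext; simp [hyperMul_eq_dotProduct_mulVec, mulVec_add])
    (fun c x y => by ext; simp [hyperMul_eq_dotProduct_mulVec, mulVec_smul])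

@[simp]
lemma hyperMulBilin_apply (x y : Fin (n + 1) → ℝ) : hyperMulBilin p x y = hyperMul p x y := rfl

lemma hyperMul_one (a : Fin (n + 1) → ℝ) : hyperMul p a (Pi.single 0 1) = a := by
  ext j
  cases j using Fin.cases <;> simp [hyperMul, Fin.succ_ne_zero]

lemma hyperMul_eq_sum (a x : Fin (n + 1) → ℝ) :
    hyperMul p a x = ∑ j, x j • hyperMul p a (Pi.single j 1) := by
  conv_lhs => rw [pi_eq_sum_univ' x, ← hyperMulBilin_apply, map_sum]
  simp

variable {p}

lemma exists_hyperMul_zero_eq (hdet : IsUnit (hyperBilinMatrix p 0).det)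
    (ℓ : Module.Dual ℝ (Fin (n + 1) → ℝ)) : ∃ y, ∀ z, hyperMul p y z 0 = ℓ z := by
  let w := (dotProductEquiv ℝ (Fin (n + 1))).symm ℓ
  refine ⟨w ᵥ* (hyperBilinMatrix p 0)⁻¹, fun z => ?_⟩
  rw [hyperMul_eq_dotProduct_mulVec, dotProduct_mulVec, vecMul_vecMul, nonsing_inv_mul _ hdet,
    vecMul_one]
  exact DFunLike.congr_fun ((dotProductEquiv ℝ (Fin (n + 1))).apply_symm_apply ℓ) z

end HypercomplexProduct

lemma hyperAbs_le {n : ℕ} (v : Fin (n + 1) → ℝ) : hyperAbs v ≤ √(n + 1) * ‖v‖ := by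
  refine Real.sqrt_le_iff.2 ⟨by positivity, ?_⟩
  calc ∑ j, v j ^ 2 ≤ ∑ _j : Fin (n + 1), ‖v‖ ^ 2 :=
        Finset.sum_le_sum fun j _ => sq_le_sq.2 (by simpa using norm_le_pi_norm v j)
    _ = (√(n + 1) * ‖v‖) ^ 2 := by
        rw [mul_pow, Real.sq_sqrt (by positivity)]
        simp

/-- The map `g ↦ (x ↦ g x • v)` from scalar to vector-valued continuous functions. -/
def smulConstCLM (X : Type*) [TopologicalSpace X] {E : Type*} [AddCommGroup E] [Module ℝ E]
    [TopologicalSpace E] [IsTopologicalAddGroup E] [ContinuousSMul ℝ E] (v : E) :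
    C(X, ℝ) →L[ℝ] C(X, E) :=
  (ContinuousLinearMap.toSpanSingleton ℝ v).compLeftContinuous ℝ X

@[simp]
lemma smulConstCLM_apply {X : Type*} [TopologicalSpace X] {E : Type*} [AddCommGroup E] [Module ℝ E]
    [TopologicalSpace E] [IsTopologicalAddGroup E] [ContinuousSMul ℝ E] (v : E) (g : C(X, ℝ))
    (x : X) : smulConstCLM X v g x = g x • v := rfl

lemma eq_sum_smulConstCLM_single {X ι : Type*} [TopologicalSpace X] [Fintype ι] [DecidableEq ι]
    (F : C(X, ι → ℝ)) : F = ∑ j, smulConstCLM X (Pi.single j 1)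
      ((ContinuousLinearMap.proj (R := ℝ) (φ := fun _ => ℝ) j).compLeftContinuous ℝ X F) :=
  ContinuousMap.ext fun x => by
    simpa [ContinuousMap.sum_apply] using pi_eq_sum_univ' (F x)

section Networks

variable {n N : ℕ} (p : Fin n → Fin n → Fin (n + 1) → ℝ)

/-- The linear part `x ↦ ∑ₖ yₖ xₖ` of a neuron with weights `y`. -/
noncomputable def preactivation (y : Fin N → Fin (n + 1) → ℝ) :
    (Fin N → Fin (n + 1) → ℝ) →L[ℝ] (Fin (n + 1) → ℝ) :=
  (∑ k, hyperMulBilin p (y k) ∘ₗ LinearMap.proj k).toContinuousLinearMap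

lemma preactivation_apply (y x : Fin N → Fin (n + 1) → ℝ) :
    preactivation p y x = ∑ k, hyperMul p (y k) (x k) := by
  simp [preactivation]

lemma exists_proj_zero_comp_preactivation_eq {p : Fin n → Fin n → Fin (n + 1) → ℝ}
    (hdet : IsUnit (hyperBilinMatrix p 0).det) (ℓ : StrongDual ℝ (Fin N → Fin (n + 1) → ℝ)) :
    ∃ y, ContinuousLinearMap.proj 0 ∘L preactivation p y = ℓ := by
  choose y hy using fun k =>
    exists_hyperMul_zero_eq hdet (ℓ.toLinearMap ∘ₗ LinearMap.single ℝ (fun _ => _) k)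
  refine ⟨y, ContinuousLinearMap.ext fun x => ?_⟩
  calc preactivation p y x 0 = ∑ k, ℓ (Pi.single k (x k)) := by
        simp [preactivation_apply, Finset.sum_apply, hy]
    _ = ℓ x := by rw [← map_sum, Finset.univ_sum_single]

variable (ψ : C(ℝ, ℝ)) (K : Set (Fin N → Fin (n + 1) → ℝ))

/-- The function `x ↦ a ψ_ℍ(∑ₖ yₖ xₖ + θ)` on `K`, a summand of a network. -/
noncomputable def neuron (a θ : Fin (n + 1) → ℝ) (y : Fin N → Fin (n + 1) → ℝ) :
    C(K, Fin (n + 1) → ℝ) where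
  toFun x := hyperMul p a (splitActivation ψ (preactivation p y x + θ))
  continuous_toFun := (hyperMulBilin p a).continuous_of_finiteDimensional.comp <|
    continuous_pi fun j => ψ.continuous.comp <| (continuous_apply j).comp <| by fun_prop

lemma neuron_apply (a θ : Fin (n + 1) → ℝ) (y : Fin N → Fin (n + 1) → ℝ) (x : K) :
    neuron p ψ K a θ y x =
      hyperMul p a (splitActivation ψ ((∑ k, hyperMul p (y k) (x.1 k)) + θ)) := by
  rw [← preactivation_apply]
  rfl

lemma neuron_smul (c : ℝ) (a θ : Fin (n + 1) → ℝ) (y : Fin N → Fin (n + 1) → ℝ) :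
    neuron p ψ K (c • a) θ y = c • neuron p ψ K a θ y :=
  ContinuousMap.ext fun _ => (hyperMulBilin p).map_smul₂ c a _

lemma neuron_eq_sum (a θ : Fin (n + 1) → ℝ) (y : Fin N → Fin (n + 1) → ℝ) :
    neuron p ψ K a θ y = ∑ j, smulConstCLM K (hyperMul p a (Pi.single j 1))
      (ridge ψ K (ContinuousLinearMap.proj j ∘L preactivation p y) (θ j)) :=
  ContinuousMap.ext fun x => by
    rw [ContinuousMap.sum_apply]
    exact hyperMul_eq_sum p a _

/-- The functions on `K` computed by networks with one hidden layer. -/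
noncomputable def networks : Submodule ℝ C(K, Fin (n + 1) → ℝ) :=
  Submodule.span ℝ {F | ∃ a θ y, F = neuron p ψ K a θ y}

variable {p ψ K}

lemma exists_eq_sum_neuron {F : C(K, Fin (n + 1) → ℝ)} (hF : F ∈ networks p ψ K) :
    ∃ (M : ℕ) (α θ : Fin M → Fin (n + 1) → ℝ) (y : Fin M → Fin N → Fin (n + 1) → ℝ),
      F = ∑ i, neuron p ψ K (α i) (θ i) (y i) := by
  obtain ⟨M, c, G, rfl⟩ := Submodule.mem_span_set'.1 hF
  choose a θ y hG using fun i => (G i).2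
  exact ⟨M, fun i => c i • a i, θ, y, Finset.sum_congr rfl fun i _ => by rw [hG, neuron_smul]⟩

lemma tendsto_neuron_atBot (hψ : Filter.Tendsto ψ Filter.atBot (nhds 0)) (hK : IsCompact K)
    (a : Fin (n + 1) → ℝ) (t : ℝ) (y : Fin N → Fin (n + 1) → ℝ) :
    Filter.Tendsto (fun s => neuron p ψ K a (Fin.cons t fun _ => s) y) Filter.atBot
      (nhds (smulConstCLM K a
        (ridge ψ K (ContinuousLinearMap.proj 0 ∘L preactivation p y) t))) := by
  simp only [neuron_eq_sum, Fin.sum_univ_succ, Fin.cons_zero, Fin.cons_succ, hyperMul_one]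
  have himag (j : Fin n) :=
    ((smulConstCLM K (hyperMul p a (Pi.single j.succ 1))).continuous.tendsto 0).comp
      (tendsto_ridge_atBot hψ hK (ContinuousLinearMap.proj j.succ ∘L preactivation p y))
  simpa using tendsto_const_nhds.add (tendsto_finsetSum Finset.univ fun j _ => himag j)

lemma smulConstCLM_mem_networks_topologicalClosure (hdet : IsUnit (hyperBilinMatrix p 0).det)
    (hψ : Filter.Tendsto ψ Filter.atBot (nhds 0)) (hK : IsCompact K)
    (hridge : (ridgeSpan ψ K).topologicalClosure = ⊤) (a : Fin (n + 1) → ℝ) (g : C(K, ℝ)) :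
    smulConstCLM K a g ∈ (networks p ψ K).topologicalClosure := by
  suffices h : (ridgeSpan ψ K).topologicalClosure ≤
      (networks p ψ K).topologicalClosure.comap (smulConstCLM K a).toLinearMap from
    h (hridge ▸ Submodule.mem_top)
  refine Submodule.topologicalClosure_minimal _ (Submodule.span_le.2 ?_)
    ((networks p ψ K).isClosed_topologicalClosure.preimage (smulConstCLM K a).continuous)
  rintro _ ⟨⟨ℓ, t⟩, rfl⟩
  obtain ⟨y, rfl⟩ := exists_proj_zero_comp_preactivation_eq hdet ℓ
  exact mem_closure_of_tendsto (tendsto_neuron_atBot hψ hK a t y)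
    (.of_forall fun s => Submodule.subset_span ⟨a, _, y, rfl⟩)

lemma networks_topologicalClosure_eq_top (hdet : IsUnit (hyperBilinMatrix p 0).det)
    (hψ : Filter.Tendsto ψ Filter.atBot (nhds 0)) (hK : IsCompact K)
    (hridge : (ridgeSpan ψ K).topologicalClosure = ⊤) :
    (networks p ψ K).topologicalClosure = ⊤ := by
  refine eq_top_iff.2 fun F _ => ?_
  rw [eq_sum_smulConstCLM_single F]
  exact Submodule.sum_mem _ fun j _ =>
    smulConstCLM_mem_networks_topologicalClosure hdet hψ hK hridge _ _

end Networks

theorem universal_approximation_hypercomplex_general {n N m : ℕ}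
    (p : Fin n → Fin n → Fin (n + 1) → ℝ) (hdet : IsUnit (hyperBilinMatrix p 0).det)
    (K : Set (Fin N → Fin (n + 1) → ℝ)) (hK : IsCompact K)
    (ψ : ℝ → ℝ) (hψcont : Continuous ψ) (hψlim : Filter.Tendsto ψ Filter.atBot (nhds 0))
    (e : (Fin N → Fin (n + 1) → ℝ) ≃L[ℝ] (Fin m → ℝ)) (hψdisc : Discriminatory ψ (e '' K))
    (f : (Fin N → Fin (n + 1) → ℝ) → (Fin (n + 1) → ℝ)) (hf : ContinuousOn f K)
    (ε : ℝ) (hε : 0 < ε) :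
    ∃ (M : ℕ) (α θ : Fin M → Fin (n + 1) → ℝ)
      (y : Fin M → Fin N → Fin (n + 1) → ℝ),
      ∀ x ∈ K,
        hyperAbs (f x - ∑ i : Fin M,
          hyperMul p (α i)
            (splitActivation ψ ((∑ k : Fin N, hyperMul p (y i k) (x k)) + θ i)))
          < ε := by
  lift ψ to C(ℝ, ℝ) using hψcont
  have : CompactSpace K := isCompact_iff_compactSpace.1 hK
  let F : C(K, Fin (n + 1) → ℝ) := ⟨K.domRestrict f, hf.domRestrict⟩
  have hF : F ∈ (networks p ψ K).topologicalClosure :=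
    networks_topologicalClosure_eq_top hdet hψlim hK
      (hψdisc.ridgeSpan_topologicalClosure_eq_top_of_image hK e) ▸ Submodule.mem_top
  obtain ⟨G, hG, hFG⟩ := Metric.mem_closure_iff.1 hF (ε / √(n + 1)) (by positivity)
  obtain ⟨M, α, θ, y, rfl⟩ := exists_eq_sum_neuron hG
  refine ⟨M, α, θ, y, fun x hx => ?_⟩
  have hval : ∑ i, hyperMul p (α i) (splitActivation ψ ((∑ k, hyperMul p (y i k) (x k)) + θ i)) =
      (∑ i, neuron p ψ K (α i) (θ i) (y i)) ⟨x, hx⟩ := by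
    simp [ContinuousMap.sum_apply, neuron_apply]
  rw [hval]
  calc hyperAbs (F ⟨x, hx⟩ - _) ≤ √(n + 1) * dist (F ⟨x, hx⟩) _ :=
        (hyperAbs_le _).trans_eq (by rw [dist_eq_norm])
    _ ≤ √(n + 1) * dist F _ := by gcongr; exact ContinuousMap.dist_apply_le_dist _
    _ < ε := (lt_div_iff₀' (by positivity)).1 hFG

/-- **Universal approximation theorem for hypercomplex-valued
neural networks.** Let `ℍ` be a non-degenerate hypercomplex algebra of
dimension `n+1`, `K ⊆ ℍ^N` compact, and `ψ : ℝ → ℝ` continuous with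
`ψ(λ) → 0` as `λ → −∞` and discriminatory for every compact subset of
`ℝ^{(n+1)N}`. Then single-hidden-layer `ℍ`-valued MLPs with split activation
`ψ_ℍ` approximate every continuous `f : K → ℍ` uniformly on `K` to within any
`ε > 0`. -/
theorem universal_approximation_hypercomplex {n N : ℕ} (hN : 1 ≤ N)
    (p : Fin n → Fin n → Fin (n + 1) → ℝ)
    (hnondeg : ∀ j : Fin (n + 1), IsUnit (hyperBilinMatrix p j).det)
    (K : Set (Fin N → Fin (n + 1) → ℝ)) (hK : IsCompact K)
    (ψ : ℝ → ℝ) (hψcont : Continuous ψ)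
    (hψlim : Filter.Tendsto ψ Filter.atBot (nhds 0))
    (hψdisc : ∀ K' : Set (Fin ((n + 1) * N) → ℝ), IsCompact K' →
      Discriminatory ψ K')
    (f : (Fin N → Fin (n + 1) → ℝ) → (Fin (n + 1) → ℝ)) (hf : ContinuousOn f K)
    (ε : ℝ) (hε : 0 < ε) :
    ∃ (M : ℕ) (α θ : Fin M → Fin (n + 1) → ℝ)
      (y : Fin M → Fin N → Fin (n + 1) → ℝ),
      ∀ x ∈ K,
        hyperAbs (f x - ∑ i : Fin M,
          hyperMul p (α i)
            (splitActivation ψ ((∑ k : Fin N, hyperMul p (y i k) (x k)) + θ i)))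
          < ε := by
  let e : (Fin N → Fin (n + 1) → ℝ) ≃L[ℝ] (Fin ((n + 1) * N) → ℝ) :=
    .ofFinrankEq (by simp [Module.finrank_pi_fintype, mul_comm])
  exact universal_approximation_hypercomplex_general p (hnondeg 0) K hK ψ hψcont hψlim e
    (hψdisc _ (hK.image e.continuous)) f hf ε hε
end

section
/- Let K ⊆ ℚ^N be a compact set, where ℚ = Quaternion ℝ denotes the real quaternions. For every continuous function f : K → ℚ and every ε > 0 there exist M ∈ ℕ, α_1,…,α_M ∈ ℚ, θ_1,…,θ_M ∈ ℚ, and y_1,…,y_M ∈ ℚ^N such that |f(x) − Σ_{i=1}^M α_i σ_ℚ(Σ_{k=1}^N y_{ik} x_k + θ_i)| < ε for all x ∈ K, where σ_ℚ is the split sigmoid activation, all products are quaternion products, and |·| is the quaternion norm; that is, single-hidden-layer quaternion-valued MLPs with split sigmoid activation are universal approximators of continuous quaternion-valued functions on compact subsets of ℚ^N. -/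
/-- The logistic sigmoid. -/
noncomputable def logisticSigmoid (t : ℝ) : ℝ := 1 / (1 + Real.exp (-t))

/-- The split sigmoid activation `σ_ℚ` on the real quaternions, applying the
logistic sigmoid to each of the four coordinates. -/
noncomputable def splitSigmoidQ (x : Quaternion ℝ) : Quaternion ℝ :=
  ⟨logisticSigmoid x.re, logisticSigmoid x.imI,
    logisticSigmoid x.imJ, logisticSigmoid x.imK⟩

/-!
At `-∞` the logistic sigmoid `σ` is asymptotic to `exp`, so `exp n * σ (t - n) → exp t` while
`exp n * σ (t - 2 * n) → 0` as `n → ∞`, both uniformly for bounded `t`. A single neuron with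
coefficient `exp n` and bias `-n - 2 n i - 2 n j - 2 n k` therefore converges uniformly to the
real-valued function `x ↦ exp (Re (y · x))`: the three imaginary coordinates are pushed into the
tail of `σ` twice as fast and disappear. These exponentials form a monoid that separates points, so
by Stone–Weierstrass their real span is dense among the real-valued continuous functions, and left
multiplication by `1, i, j, k` passes from real-valued to quaternion-valued functions.
-/

open Filter Topology
open scoped Quaternion

lemma logisticSigmoid_eq_sigmoid : logisticSigmoid = Real.sigmoid := by
  ext t
  rw [logisticSigmoid, Real.sigmoid_def, one_div]

lemma logisticSigmoid_eq_exp_div (t : ℝ) :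
    logisticSigmoid t = Real.exp t / (1 + Real.exp t) := by
  rw [logisticSigmoid, Real.exp_neg]
  field_simp
  ring

lemma logisticSigmoid_pos (t : ℝ) : 0 < logisticSigmoid t := by
  rw [logisticSigmoid_eq_sigmoid]
  exact Real.sigmoid_pos t

lemma logisticSigmoid_le_exp (t : ℝ) : logisticSigmoid t ≤ Real.exp t := by
  rw [logisticSigmoid_eq_exp_div]
  exact div_le_self (Real.exp_nonneg t) (by linarith [Real.exp_pos t])

lemma exp_sub_logisticSigmoid_le (t : ℝ) :
    Real.exp t - logisticSigmoid t ≤ Real.exp (2 * t) := by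
  have h : Real.exp t - logisticSigmoid t = Real.exp (2 * t) / (1 + Real.exp t) := by
    rw [logisticSigmoid_eq_exp_div, two_mul, Real.exp_add]
    field_simp
    ring
  rw [h]
  exact div_le_self (Real.exp_nonneg _) (by linarith [Real.exp_pos t])

lemma abs_exp_sub_exp_mul_logisticSigmoid_le (n t : ℝ) :
    |Real.exp t - Real.exp n * logisticSigmoid (t - n)| ≤ Real.exp (2 * t - n) := by
  have h : Real.exp t - Real.exp n * logisticSigmoid (t - n) =
      Real.exp n * (Real.exp (t - n) - logisticSigmoid (t - n)) := by
    rw [mul_sub, ← Real.exp_add, add_sub_cancel]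
  rw [h, abs_of_nonneg (mul_nonneg (Real.exp_nonneg n) (sub_nonneg.2 (logisticSigmoid_le_exp _)))]
  calc Real.exp n * (Real.exp (t - n) - logisticSigmoid (t - n))
      ≤ Real.exp n * Real.exp (2 * (t - n)) := by gcongr; exact exp_sub_logisticSigmoid_le _
    _ = Real.exp (2 * t - n) := by rw [← Real.exp_add]; ring_nf

lemma abs_exp_mul_logisticSigmoid_le (n t : ℝ) :
    |Real.exp n * logisticSigmoid (t - 2 * n)| ≤ Real.exp (t - n) := by
  rw [abs_of_pos (mul_pos (Real.exp_pos n) (logisticSigmoid_pos _))]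
  calc Real.exp n * logisticSigmoid (t - 2 * n)
      ≤ Real.exp n * Real.exp (t - 2 * n) := by gcongr; exact logisticSigmoid_le_exp _
    _ = Real.exp (t - n) := by rw [← Real.exp_add]; ring_nf

/-- The quaternion unit `i`. -/
@[simps]
def quaternionI : ℍ[ℝ] := ⟨0, 1, 0, 0⟩

/-- The quaternion unit `j`. -/
@[simps]
def quaternionJ : ℍ[ℝ] := ⟨0, 0, 1, 0⟩

/-- The quaternion unit `k`. -/
@[simps]
def quaternionK : ℍ[ℝ] := ⟨0, 0, 0, 1⟩

lemma quaternion_eq_coe_add_mul (q : ℍ[ℝ]) :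
    q = q.re + quaternionI * q.imI + quaternionJ * q.imJ + quaternionK * q.imK := by
  ext <;> simp

lemma quaternion_sq_norm (q : ℍ[ℝ]) :
    ‖q‖ ^ 2 = q.re ^ 2 + q.imI ^ 2 + q.imJ ^ 2 + q.imK ^ 2 := by
  rw [sq, ← Quaternion.normSq_eq_norm_mul_self, Quaternion.normSq_def']

lemma quaternion_abs_re_le_norm (q : ℍ[ℝ]) : |q.re| ≤ ‖q‖ := by
  refine abs_le_of_sq_le_sq ?_ (norm_nonneg q)
  linarith [quaternion_sq_norm q, sq_nonneg q.imI, sq_nonneg q.imJ, sq_nonneg q.imK]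

lemma quaternion_abs_imI_le_norm (q : ℍ[ℝ]) : |q.imI| ≤ ‖q‖ := by
  refine abs_le_of_sq_le_sq ?_ (norm_nonneg q)
  linarith [quaternion_sq_norm q, sq_nonneg q.re, sq_nonneg q.imJ, sq_nonneg q.imK]

lemma quaternion_abs_imJ_le_norm (q : ℍ[ℝ]) : |q.imJ| ≤ ‖q‖ := by
  refine abs_le_of_sq_le_sq ?_ (norm_nonneg q)
  linarith [quaternion_sq_norm q, sq_nonneg q.re, sq_nonneg q.imI, sq_nonneg q.imK]

lemma quaternion_abs_imK_le_norm (q : ℍ[ℝ]) : |q.imK| ≤ ‖q‖ := by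
  refine abs_le_of_sq_le_sq ?_ (norm_nonneg q)
  linarith [quaternion_sq_norm q, sq_nonneg q.re, sq_nonneg q.imI, sq_nonneg q.imJ]

lemma quaternion_norm_le_two_mul {q : ℍ[ℝ]} {δ : ℝ} (h₀ : |q.re| ≤ δ) (h₁ : |q.imI| ≤ δ)
    (h₂ : |q.imJ| ≤ δ) (h₃ : |q.imK| ≤ δ) : ‖q‖ ≤ 2 * δ := by
  have hδ : 0 ≤ δ := (abs_nonneg _).trans h₀
  refine le_of_sq_le_sq ?_ (by positivity)
  rw [quaternion_sq_norm]
  linarith [sq_le_sq' (abs_le.1 h₀).1 (abs_le.1 h₀).2, sq_le_sq' (abs_le.1 h₁).1 (abs_le.1 h₁).2,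
    sq_le_sq' (abs_le.1 h₂).1 (abs_le.1 h₂).2, sq_le_sq' (abs_le.1 h₃).1 (abs_le.1 h₃).2]

lemma continuous_splitSigmoidQ : Continuous splitSigmoidQ := by
  have hσ : Continuous logisticSigmoid := logisticSigmoid_eq_sigmoid ▸ continuous_sigmoid
  have hcoord : Continuous fun q : ℍ[ℝ] ↦ ![logisticSigmoid q.re, logisticSigmoid q.imI,
      logisticSigmoid q.imJ, logisticSigmoid q.imK] := by
    refine continuous_pi fun l ↦ ?_
    fin_cases l
    exacts [hσ.comp Quaternion.continuous_re, hσ.comp Quaternion.continuous_imI,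
      hσ.comp Quaternion.continuous_imJ, hσ.comp Quaternion.continuous_imK]
  exact Quaternion.linearIsometryEquivTuple.symm.continuous.comp
    ((PiLp.continuous_toLp 2 _).comp hcoord)

attribute [simps] splitSigmoidQ

/-- The bias `-n - 2 n i - 2 n j - 2 n k`, which moves the imaginary coordinates twice as far into
the tail of the sigmoid as the real one. -/
@[simps]
def tailBias (n : ℝ) : ℍ[ℝ] := ⟨-n, -(2 * n), -(2 * n), -(2 * n)⟩

lemma norm_coe_exp_re_sub_exp_mul_splitSigmoidQ_le (q : ℍ[ℝ]) (n : ℝ) :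
    ‖((Real.exp q.re : ℝ) : ℍ[ℝ]) - (Real.exp n : ℝ) * splitSigmoidQ (q + tailBias n)‖ ≤
      2 * Real.exp (2 * ‖q‖ - n) := by
  have hre : |Real.exp q.re - Real.exp n * logisticSigmoid (q.re - n)| ≤
      Real.exp (2 * ‖q‖ - n) := by
    refine (abs_exp_sub_exp_mul_logisticSigmoid_le n q.re).trans (Real.exp_le_exp.2 ?_)
    linarith [le_of_abs_le (quaternion_abs_re_le_norm q)]
  have him {t : ℝ} (ht : |t| ≤ ‖q‖) :
      |Real.exp n * logisticSigmoid (t - 2 * n)| ≤ Real.exp (2 * ‖q‖ - n) := by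
    refine (abs_exp_mul_logisticSigmoid_le n t).trans (Real.exp_le_exp.2 ?_)
    linarith [le_of_abs_le ht, norm_nonneg q]
  apply quaternion_norm_le_two_mul
  · simpa [← sub_eq_add_neg] using hre
  · simpa [← sub_eq_add_neg] using him (quaternion_abs_imI_le_norm q)
  · simpa [← sub_eq_add_neg] using him (quaternion_abs_imJ_le_norm q)
  · simpa [← sub_eq_add_neg] using him (quaternion_abs_imK_le_norm q)

section Density

variable {X : Type*} [TopologicalSpace X]

lemma topologicalClosure_span_submonoid_eq_top [CompactSpace X] (S : Submonoid C(X, ℝ))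
    (hS : ((⇑) '' (S : Set C(X, ℝ))).SeparatesPoints) :
    (Submodule.span ℝ (S : Set C(X, ℝ))).topologicalClosure = ⊤ := by
  have hadjoin : (Algebra.adjoin ℝ (S : Set C(X, ℝ))).SeparatesPoints := fun x x' hx ↦
    (hS hx).imp fun _ h ↦ ⟨Set.image_mono Algebra.subset_adjoin h.1, h.2⟩
  have h := ContinuousMap.subalgebra_topologicalClosure_eq_top_of_separatesPoints _ hadjoin
  rw [← S.closure_eq, ← Algebra.adjoin_eq_span]
  exact congrArg Subalgebra.toSubmodule h

/-- Real-valued continuous functions viewed as quaternion-valued ones. -/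
noncomputable def coeQuaternionCLM (X : Type*) [TopologicalSpace X] :
    C(X, ℝ) →L[ℝ] C(X, ℍ[ℝ]) :=
  (algebraMapCLM ℝ ℍ[ℝ]).compLeftContinuous ℝ X

lemma submodule_eq_top_of_coeQuaternionCLM_mem {P : Submodule ℍ[ℝ] C(X, ℍ[ℝ])}
    (hP : ∀ g, coeQuaternionCLM X g ∈ P) : P = ⊤ := by
  refine Submodule.eq_top_iff'.2 fun f ↦ ?_
  have hf : f = coeQuaternionCLM X ⟨_, Quaternion.continuous_re.comp f.continuous⟩ +
      quaternionI • coeQuaternionCLM X ⟨_, Quaternion.continuous_imI.comp f.continuous⟩ +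
      quaternionJ • coeQuaternionCLM X ⟨_, Quaternion.continuous_imJ.comp f.continuous⟩ +
      quaternionK • coeQuaternionCLM X ⟨_, Quaternion.continuous_imK.comp f.continuous⟩ := by
    ext1 x
    exact quaternion_eq_coe_add_mul (f x)
  rw [hf]
  exact add_mem (add_mem (add_mem (hP _) (P.smul_mem _ (hP _))) (P.smul_mem _ (hP _)))
    (P.smul_mem _ (hP _))

variable {Y : Type*} [AddZeroClass Y]

/-- The hidden neuron `x ↦ σ_ℚ (L y x + θ)` with weight `y` and bias `θ`, where `L` is the
additive family of preactivations, such as `L y x = ∑ k, y k * x k`. -/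
noncomputable def splitSigmoidNeuron (L : Y →+ C(X, ℍ[ℝ])) (y : Y) (θ : ℍ[ℝ]) : C(X, ℍ[ℝ]) :=
  ⟨fun x ↦ splitSigmoidQ (L y x + θ), continuous_splitSigmoidQ.comp (by fun_prop)⟩

/-- The functions computed by single-hidden-layer networks with split sigmoid activation and
preactivations from `L`. The output coefficients act by left multiplication. -/
noncomputable def splitSigmoidNetworks (L : Y →+ C(X, ℍ[ℝ])) : Submodule ℍ[ℝ] C(X, ℍ[ℝ]) :=
  Submodule.span ℍ[ℝ] (Set.range fun p : Y × ℍ[ℝ] ↦ splitSigmoidNeuron L p.1 p.2)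

lemma mem_splitSigmoidNetworks {L : Y →+ C(X, ℍ[ℝ])} {g : C(X, ℍ[ℝ])} :
    g ∈ splitSigmoidNetworks L ↔ ∃ (M : ℕ) (α θ : Fin M → ℍ[ℝ]) (y : Fin M → Y),
      ∀ x, g x = ∑ i, α i * splitSigmoidQ (L (y i) x + θ i) := by
  rw [splitSigmoidNetworks, Submodule.mem_span_set']
  constructor
  · rintro ⟨M, α, neuron, rfl⟩
    choose p hp using fun i ↦ (neuron i).2
    refine ⟨M, α, fun i ↦ (p i).2, fun i ↦ (p i).1, fun x ↦ ?_⟩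
    simp only [← hp, ContinuousMap.sum_apply]
    rfl
  · rintro ⟨M, α, θ, y, hg⟩
    refine ⟨M, α, fun i ↦ ⟨_, ⟨(y i, θ i), rfl⟩⟩, ?_⟩
    ext1 x
    rw [hg, ContinuousMap.sum_apply]
    rfl

/-- The real exponentials `x ↦ exp (Re (L y x))`, as a homomorphism turning sums of weights into
products of functions. -/
noncomputable def expReHom (L : Y →+ C(X, ℍ[ℝ])) : Multiplicative Y →* C(X, ℝ) where
  toFun y := ⟨fun x ↦ Real.exp (L y.toAdd x).re,
    Real.continuous_exp.comp (Quaternion.continuous_re.comp (L y.toAdd).continuous)⟩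
  map_one' := by ext x; simp
  map_mul' y z := by ext x; simp [Real.exp_add]

lemma separatesPoints_mrange_expReHom {L : Y →+ C(X, ℍ[ℝ])}
    (hL : ∀ x x', x ≠ x' → ∃ y, (L y x).re ≠ (L y x').re) :
    ((⇑) '' (MonoidHom.mrange (expReHom L) : Set C(X, ℝ))).SeparatesPoints := by
  intro x x' hx
  obtain ⟨y, hy⟩ := hL x x' hx
  exact ⟨_, ⟨expReHom L (.ofAdd y), ⟨.ofAdd y, rfl⟩, rfl⟩, fun h ↦ hy (Real.exp_injective h)⟩

variable [CompactSpace X]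

lemma tendsto_exp_smul_splitSigmoidNeuron (L : Y →+ C(X, ℍ[ℝ])) (y : Y) :
    Tendsto (fun n : ℝ ↦ ((Real.exp n : ℝ) : ℍ[ℝ]) • splitSigmoidNeuron L y (tailBias n)) atTop
      (𝓝 (coeQuaternionCLM X (expReHom L (.ofAdd y)))) := by
  have hbound : Tendsto (fun n : ℝ ↦ 2 * Real.exp (2 * ‖L y‖ - n)) atTop (𝓝 0) := by
    have hexponent : Tendsto (fun n : ℝ ↦ 2 * ‖L y‖ - n) atTop atBot :=
      tendsto_atBot_add_const_left _ _ tendsto_neg_atTop_atBot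
    simpa using (Real.tendsto_exp_atBot.comp hexponent).const_mul 2
  rw [tendsto_iff_norm_sub_tendsto_zero]
  refine squeeze_zero (fun _ ↦ norm_nonneg _) (fun n ↦ ?_) hbound
  rw [norm_sub_rev, ContinuousMap.norm_le _ (by positivity)]
  intro x
  refine (norm_coe_exp_re_sub_exp_mul_splitSigmoidQ_le (L y x) n).trans ?_
  gcongr
  exact (L y).norm_coe_le_norm x

lemma coeQuaternionCLM_mem_topologicalClosure {L : Y →+ C(X, ℍ[ℝ])}
    (hL : ∀ x x', x ≠ x' → ∃ y, (L y x).re ≠ (L y x').re) (g : C(X, ℝ)) :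
    coeQuaternionCLM X g ∈ (splitSigmoidNetworks L).topologicalClosure := by
  let A : Submodule ℝ C(X, ℝ) :=
    ((splitSigmoidNetworks L).topologicalClosure.restrictScalars ℝ).comap
      (coeQuaternionCLM X).toLinearMap
  have hA : IsClosed (A : Set C(X, ℝ)) :=
    (splitSigmoidNetworks L).isClosed_topologicalClosure.preimage (coeQuaternionCLM X).continuous
  have hexp : Submodule.span ℝ (MonoidHom.mrange (expReHom L) : Set C(X, ℝ)) ≤ A := by
    rw [Submodule.span_le]
    rintro _ ⟨y, rfl⟩
    exact mem_closure_of_tendsto (tendsto_exp_smul_splitSigmoidNeuron L y.toAdd)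
      (.of_forall fun n ↦ Submodule.smul_mem _ _ (Submodule.subset_span ⟨(_, _), rfl⟩))
  have hdense := topologicalClosure_span_submonoid_eq_top _ (separatesPoints_mrange_expReHom hL)
  exact Submodule.topologicalClosure_minimal _ hexp hA (hdense ▸ Submodule.mem_top)

theorem topologicalClosure_splitSigmoidNetworks_eq_top {L : Y →+ C(X, ℍ[ℝ])}
    (hL : ∀ x x', x ≠ x' → ∃ y, (L y x).re ≠ (L y x').re) :
    (splitSigmoidNetworks L).topologicalClosure = ⊤ :=
  submodule_eq_top_of_coeQuaternionCLM_mem (coeQuaternionCLM_mem_topologicalClosure hL)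

end Density

theorem universal_approximation_quaternion_general {E Y : Type*} [TopologicalSpace E]
    [AddZeroClass Y] (L : Y →+ C(E, ℍ[ℝ])) {K : Set E} (hK : IsCompact K)
    (hL : ∀ x ∈ K, ∀ x' ∈ K, x ≠ x' → ∃ y, (L y x).re ≠ (L y x').re)
    {f : E → ℍ[ℝ]} (hf : ContinuousOn f K) {ε : ℝ} (hε : 0 < ε) :
    ∃ (M : ℕ) (α θ : Fin M → ℍ[ℝ]) (y : Fin M → Y),
      ∀ x ∈ K, ‖f x - ∑ i, α i * splitSigmoidQ (L (y i) x + θ i)‖ < ε := by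
  have := isCompact_iff_compactSpace.1 hK
  let LK : Y →+ C(K, ℍ[ℝ]) := (ContinuousMap.compAddMonoidHom' (.restrict K (.id E))).comp L
  let fK : C(K, ℍ[ℝ]) := ⟨K.domRestrict f, continuousOn_iff_continuous_domRestrict.1 hf⟩
  have hLK : ∀ x x' : K, x ≠ x' → ∃ y, (LK y x).re ≠ (LK y x').re := fun x x' hx ↦
    hL x x.2 x' x'.2 (Subtype.coe_injective.ne hx)
  have hfK : fK ∈ (splitSigmoidNetworks LK).topologicalClosure :=
    topologicalClosure_splitSigmoidNetworks_eq_top hLK ▸ Submodule.mem_top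
  obtain ⟨g, hg, hfg⟩ := Metric.mem_closure_iff.1 hfK ε hε
  obtain ⟨M, α, θ, y, hsum⟩ := mem_splitSigmoidNetworks.1 hg
  refine ⟨M, α, θ, y, fun x hx ↦ ?_⟩
  calc ‖f x - ∑ i, α i * splitSigmoidQ (L (y i) x + θ i)‖ = dist (fK ⟨x, hx⟩) (g ⟨x, hx⟩) := by
        rw [hsum, dist_eq_norm]; rfl
    _ ≤ dist fK g := ContinuousMap.dist_apply_le_dist _
    _ < ε := hfg

/-- The linear forms `x ↦ ∑ k, y k * x k` on a finite power of a topological ring, as an additive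
family of continuous functions indexed by the weights `y`. -/
def continuousDotProductHom (ι R : Type*) [Fintype ι] [NonUnitalNonAssocSemiring R]
    [TopologicalSpace R] [IsTopologicalSemiring R] : (ι → R) →+ C(ι → R, R) where
  toFun y := ⟨fun x ↦ ∑ k, y k * x k, by fun_prop⟩
  map_zero' := by ext x; simp
  map_add' y z := by ext x; simp [add_mul, Finset.sum_add_distrib]

lemma exists_re_continuousDotProductHom_ne {ι : Type*} [Fintype ι]
    {x x' : ι → ℍ[ℝ]} (hx : x ≠ x') :
    ∃ y, (continuousDotProductHom ι ℍ[ℝ] y x).re ≠ (continuousDotProductHom ι ℍ[ℝ] y x').re := by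
  classical
  obtain ⟨k, hk⟩ := Function.ne_iff.1 hx
  -- Separated by `z ↦ Re (star d * z k)`, since `Re (star d * d) = ‖d‖ ^ 2` for `d = x k - x' k`.
  let d := x k - x' k
  have hform (z : ι → ℍ[ℝ]) :
      continuousDotProductHom ι ℍ[ℝ] (Pi.single k (star d)) z = star d * z k :=
    single_dotProduct z (star d) k
  refine ⟨Pi.single k (star d), fun h ↦ hk (sub_eq_zero.1 (Quaternion.normSq_eq_zero.1 ?_))⟩
  rw [hform, hform, ← sub_eq_zero, ← Quaternion.re_sub, ← mul_sub, Quaternion.star_mul_self] at h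
  exact h

/-- Single-hidden-layer quaternion-valued MLPs with split
sigmoid activation are universal approximators of continuous quaternion-valued
functions on compact subsets of `ℚ^N` (`ℚ = Quaternion ℝ`), with respect to the
quaternion norm. -/
theorem universal_approximation_quaternion {N : ℕ}
    (K : Set (Fin N → Quaternion ℝ)) (hK : IsCompact K)
    (f : (Fin N → Quaternion ℝ) → Quaternion ℝ) (hf : ContinuousOn f K)
    (ε : ℝ) (hε : 0 < ε) :
    ∃ (M : ℕ) (α θ : Fin M → Quaternion ℝ)
      (y : Fin M → Fin N → Quaternion ℝ),
      ∀ x ∈ K,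
        ‖f x - ∑ i : Fin M,
          α i * splitSigmoidQ ((∑ k : Fin N, y i k * x k) + θ i)‖ < ε :=
  universal_approximation_quaternion_general (continuousDotProductHom (Fin N) (Quaternion ℝ)) hK
    (fun _ _ _ _ ↦ exists_re_continuousDotProductHom_ne) hf hε
end

section
/- Let 𝕌 denote the hyperbolic numbers, realized as ℝ² with the product (a,b)·(c,d) = (ac + bd, ad + bc), and let K ⊆ 𝕌^N be a compact set. For every continuous function f : K → 𝕌 and every ε > 0 there exist M ∈ ℕ, α_1,…,α_M ∈ 𝕌, θ_1,…,θ_M ∈ 𝕌, and y_1,…,y_M ∈ 𝕌^N such that |f(x) − Σ_{i=1}^M α_i σ_𝕌(Σ_{k=1}^N y_{ik} x_k + θ_i)| < ε for all x ∈ K, where σ_𝕌 is the split sigmoid activation, all products are hyperbolic products, and |·| is the Euclidean norm on ℝ²; that is, single-hidden-layer hyperbolic-valued MLPs with split sigmoid activation are universal approximators of continuous hyperbolic-valued functions on compact subsets of 𝕌^N. -/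
/-- The hyperbolic-number product on `ℝ²`: `(a,b)·(c,d) = (ac + bd, ad + bc)`. -/
def hyperbolicMul (x y : ℝ × ℝ) : ℝ × ℝ :=
  (x.1 * y.1 + x.2 * y.2, x.1 * y.2 + x.2 * y.1)

/-- The split sigmoid activation `σ_𝕌` on the hyperbolic numbers. -/
noncomputable def splitSigmoidU (x : ℝ × ℝ) : ℝ × ℝ :=
  (logisticSigmoid x.1, logisticSigmoid x.2)

/-- The Euclidean norm on the hyperbolic numbers `𝕌 ≅ ℝ²`. -/
noncomputable def hyperbolicAbs (x : ℝ × ℝ) : ℝ := Real.sqrt (x.1 ^ 2 + x.2 ^ 2)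

/-!
Only two properties of the logistic sigmoid matter: it is continuous, and `σ t ~ exp t` as
`t → -∞`. If `g` is bounded, then `exp (-b) * σ (g + b) → exp g` uniformly as `b → -∞`, so a closed
space of functions containing all `σ (g + b)` contains all `exp g`. When `g` ranges over an additive
monoid, the functions `exp g` form a multiplicative monoid and the Stone–Weierstrass theorem applies
to their span. For the split activation, sending one component of the bias to `-∞` switches off the
corresponding component of the neuron, so each component can be approximated separately. Real output
weights suffice.
-/

open Asymptotics Filter Topology

section RealValued

variable {X : Type*} [TopologicalSpace X]

/-- The real exponential as a bundled continuous map, so that `expMap.comp g` is the function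
`exp ∘ g` of `C(X, ℝ)`. -/
noncomputable def expMap : C(ℝ, ℝ) := ⟨Real.exp, Real.continuous_exp⟩

/-- The exponentials of an additive monoid of functions, as a multiplicative monoid. -/
noncomputable def expSubmonoid (G : AddSubmonoid C(X, ℝ)) : Submonoid C(X, ℝ) where
  carrier := expMap.comp '' G
  one_mem' := ⟨0, G.zero_mem, by ext; simp [expMap]⟩
  mul_mem' := by
    rintro _ _ ⟨g, hg, rfl⟩ ⟨h, hh, rfl⟩
    exact ⟨g + h, G.add_mem hg hh, by ext; simp [expMap, Real.exp_add]⟩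

variable [CompactSpace X]

lemma tendsto_comp_add_const_atBot_s16 {φ : C(ℝ, ℝ)} {l : ℝ} (hφ : Tendsto φ atBot (𝓝 l))
    (g : C(X, ℝ)) :
    Tendsto (fun b : ℝ => φ.comp (g + .const X b)) atBot (𝓝 (.const X l)) := by
  rw [ContinuousMap.tendsto_iff_tendstoUniformly, Metric.tendstoUniformly_iff]
  intro ε hε
  obtain ⟨t₀, ht₀⟩ := eventually_atBot.1 (Metric.tendsto_nhds.1 hφ ε hε)
  filter_upwards [eventually_le_atBot (t₀ - ‖g‖)] with b hb x
  have hgx : g x ≤ ‖g‖ := (le_abs_self _).trans (g.norm_coe_le_norm x)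
  rw [dist_comm]
  exact ht₀ (g x + b) (by linarith)

lemma tendsto_exp_neg_smul_comp_add_const_atBot {σ : C(ℝ, ℝ)} (hσ : σ ~[atBot] Real.exp)
    (g : C(X, ℝ)) :
    Tendsto (fun b : ℝ => Real.exp (-b) • σ.comp (g + .const X b)) atBot
      (𝓝 (expMap.comp g)) := by
  let ρ : C(ℝ, ℝ) := ⟨fun t => σ t / Real.exp t,
    σ.continuous.div Real.continuous_exp Real.exp_ne_zero⟩
  have hρ : Tendsto ρ atBot (𝓝 1) :=
    (isEquivalent_iff_tendsto_one (.of_forall Real.exp_ne_zero)).1 hσ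
  have factor (b : ℝ) : Real.exp (-b) • σ.comp (g + .const X b)
      = expMap.comp g * ρ.comp (g + .const X b) := by
    ext x
    simp only [expMap, ρ, ContinuousMap.smul_apply, ContinuousMap.mul_apply,
      ContinuousMap.comp_apply, ContinuousMap.add_apply, ContinuousMap.const_apply,
      ContinuousMap.coe_mk, smul_eq_mul, Real.exp_add, Real.exp_neg]
    field_simp
  have hone : expMap.comp g * .const X 1 = expMap.comp g := mul_one _
  simpa only [factor, hone] using (tendsto_comp_add_const_atBot_s16 hρ g).const_mul (expMap.comp g)

theorem eq_top_of_exp_comp_mem {G : AddSubmonoid C(X, ℝ)}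
    (hG : ∀ ⦃x y : X⦄, x ≠ y → ∃ g ∈ G, g x ≠ g y) {V : Submodule ℝ C(X, ℝ)}
    (hV : IsClosed (V : Set C(X, ℝ))) (hexp : ∀ g ∈ G, expMap.comp g ∈ V) : V = ⊤ := by
  let A := Algebra.adjoin ℝ (expSubmonoid G : Set C(X, ℝ))
  have hAV : (A : Set C(X, ℝ)) ⊆ V := by
    change Subalgebra.toSubmodule A ≤ V
    rw [Algebra.adjoin_eq_span, Submonoid.closure_eq, Submodule.span_le]
    rintro _ ⟨g, hg, rfl⟩
    exact hexp g hg
  have hA : A.SeparatesPoints := fun x y hxy => by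
    obtain ⟨g, hg, hgxy⟩ := hG hxy
    exact ⟨_, ⟨expMap.comp g, Algebra.subset_adjoin ⟨g, hg, rfl⟩, rfl⟩,
      Real.exp_injective.ne hgxy⟩
  exact eq_top_iff.2 fun f _ => closure_minimal hAV hV
    (ContinuousMap.continuousMap_mem_subalgebra_closure_of_separatesPoints A hA f)

theorem eq_top_of_comp_add_const_mem {σ : C(ℝ, ℝ)} (hσ : σ ~[atBot] Real.exp)
    {G : AddSubmonoid C(X, ℝ)} (hG : ∀ ⦃x y : X⦄, x ≠ y → ∃ g ∈ G, g x ≠ g y)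
    {V : Submodule ℝ C(X, ℝ)} (hV : IsClosed (V : Set C(X, ℝ)))
    (hmem : ∀ g ∈ G, ∀ b, σ.comp (g + .const X b) ∈ V) : V = ⊤ :=
  eq_top_of_exp_comp_mem hG hV fun g hg =>
    hV.mem_of_tendsto (tendsto_exp_neg_smul_comp_add_const_atBot hσ g)
      (.of_forall fun b => V.smul_mem _ (hmem g hg b))

end RealValued

section Split

variable {X : Type*} [TopologicalSpace X]

/-- The neuron `x ↦ σ_𝕌 (h x + θ)` with pre-activation `h` and bias `θ`, where `σ_𝕌` applies `σ` to
both components. -/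
def splitNeuron (σ : C(ℝ, ℝ)) (h : C(X, ℝ × ℝ)) (θ : ℝ × ℝ) : C(X, ℝ × ℝ) :=
  (σ.prodMap σ).comp (h + .const X θ)

variable (X) in
/-- Postcomposition with `a ↦ (a, 0)`. -/
noncomputable abbrev inlComp : C(X, ℝ) →L[ℝ] C(X, ℝ × ℝ) :=
  (ContinuousLinearMap.inl ℝ ℝ ℝ).compLeftContinuous ℝ X

variable (X) in
/-- Postcomposition with `a ↦ (0, a)`. -/
noncomputable abbrev inrComp : C(X, ℝ) →L[ℝ] C(X, ℝ × ℝ) :=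
  (ContinuousLinearMap.inr ℝ ℝ ℝ).compLeftContinuous ℝ X

lemma inlComp_fst_add_inrComp_snd (f : C(X, ℝ × ℝ)) :
    inlComp X (ContinuousMap.fst.comp f) + inrComp X (ContinuousMap.snd.comp f) = f := by
  ext <;> simp

lemma splitNeuron_eq_inlComp_add_inrComp (σ : C(ℝ, ℝ)) (h : C(X, ℝ × ℝ)) (θ : ℝ × ℝ) :
    splitNeuron σ h θ = inlComp X (σ.comp (ContinuousMap.fst.comp h + .const X θ.1))
      + inrComp X (σ.comp (ContinuousMap.snd.comp h + .const X θ.2)) :=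
  (inlComp_fst_add_inrComp_snd _).symm

variable [CompactSpace X]

lemma tendsto_splitNeuron_snd_atBot {σ : C(ℝ, ℝ)} (hσ : Tendsto σ atBot (𝓝 0))
    (h : C(X, ℝ × ℝ)) (b : ℝ) :
    Tendsto (fun c => splitNeuron σ h (b, c)) atBot
      (𝓝 (inlComp X (σ.comp (ContinuousMap.fst.comp h + .const X b)))) := by
  have hlim := ((inrComp X).continuous.tendsto _).comp
    (tendsto_comp_add_const_atBot_s16 hσ (ContinuousMap.snd.comp h))
  have hzero : inrComp X (.const X 0) = 0 := map_zero _
  simpa only [splitNeuron_eq_inlComp_add_inrComp, hzero, add_zero] using! hlim.const_add _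

lemma tendsto_splitNeuron_fst_atBot {σ : C(ℝ, ℝ)} (hσ : Tendsto σ atBot (𝓝 0))
    (h : C(X, ℝ × ℝ)) (c : ℝ) :
    Tendsto (fun b => splitNeuron σ h (b, c)) atBot
      (𝓝 (inrComp X (σ.comp (ContinuousMap.snd.comp h + .const X c)))) := by
  have hlim := ((inlComp X).continuous.tendsto _).comp
    (tendsto_comp_add_const_atBot_s16 hσ (ContinuousMap.fst.comp h))
  have hzero : inlComp X (.const X 0) = 0 := map_zero _
  simpa only [splitNeuron_eq_inlComp_add_inrComp, hzero, zero_add] using! hlim.add_const _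

theorem eq_top_of_splitNeuron_mem {σ : C(ℝ, ℝ)} (hσ : σ ~[atBot] Real.exp)
    {H : AddSubmonoid C(X, ℝ × ℝ)} (hfst : ∀ ⦃x y : X⦄, x ≠ y → ∃ h ∈ H, (h x).1 ≠ (h y).1)
    (hsnd : ∀ ⦃x y : X⦄, x ≠ y → ∃ h ∈ H, (h x).2 ≠ (h y).2)
    {V : Submodule ℝ C(X, ℝ × ℝ)} (hV : IsClosed (V : Set C(X, ℝ × ℝ)))
    (hmem : ∀ h ∈ H, ∀ θ, splitNeuron σ h θ ∈ V) : V = ⊤ := by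
  have hσ₀ : Tendsto σ atBot (𝓝 0) := hσ.symm.tendsto_nhds Real.tendsto_exp_atBot
  have hinl : V.comap (inlComp X).toLinearMap = ⊤ := by
    refine eq_top_of_comp_add_const_mem hσ
      (G := H.map ((AddMonoidHom.fst ℝ ℝ).compLeftContinuous X continuous_fst)) (fun x y hxy => ?_)
      (hV.preimage (inlComp X).continuous) ?_
    · obtain ⟨h, hh, hne⟩ := hfst hxy
      exact ⟨_, ⟨h, hh, rfl⟩, hne⟩
    · rintro _ ⟨h, hh, rfl⟩ b
      exact hV.mem_of_tendsto (tendsto_splitNeuron_snd_atBot hσ₀ h b)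
        (.of_forall fun c => hmem h hh (b, c))
  have hinr : V.comap (inrComp X).toLinearMap = ⊤ := by
    refine eq_top_of_comp_add_const_mem hσ
      (G := H.map ((AddMonoidHom.snd ℝ ℝ).compLeftContinuous X continuous_snd)) (fun x y hxy => ?_)
      (hV.preimage (inrComp X).continuous) ?_
    · obtain ⟨h, hh, hne⟩ := hsnd hxy
      exact ⟨_, ⟨h, hh, rfl⟩, hne⟩
    · rintro _ ⟨h, hh, rfl⟩ c
      exact hV.mem_of_tendsto (tendsto_splitNeuron_fst_atBot hσ₀ h c)
        (.of_forall fun b => hmem h hh (b, c))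
  refine eq_top_iff.2 fun f _ => inlComp_fst_add_inrComp_snd f ▸ V.add_mem ?_ ?_
  · exact Submodule.eq_top_iff'.1 hinl _
  · exact Submodule.eq_top_iff'.1 hinr _

end Split

section Hyperbolic

lemma hyperbolicMul_zero_left (z : ℝ × ℝ) : hyperbolicMul 0 z = 0 := by
  simp [hyperbolicMul]

lemma hyperbolicMul_add_left (v w z : ℝ × ℝ) :
    hyperbolicMul (v + w) z = hyperbolicMul v z + hyperbolicMul w z := by
  ext <;> simp only [hyperbolicMul, Prod.fst_add, Prod.snd_add] <;> ring

lemma hyperbolicMul_real_left (a : ℝ) (z : ℝ × ℝ) : hyperbolicMul (a, 0) z = a • z := by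
  ext <;> simp [hyperbolicMul]

lemma hyperbolicAbs_le_sqrt_two_mul_norm (z : ℝ × ℝ) : hyperbolicAbs z ≤ √2 * ‖z‖ := by
  have hfst : z.1 ^ 2 ≤ ‖z‖ ^ 2 := sq_le_sq.2 ((norm_fst_le z).trans (le_abs_self _))
  have hsnd : z.2 ^ 2 ≤ ‖z‖ ^ 2 := sq_le_sq.2 ((norm_snd_le z).trans (le_abs_self _))
  calc √(z.1 ^ 2 + z.2 ^ 2) ≤ √(2 * ‖z‖ ^ 2) := Real.sqrt_le_sqrt (by linarith)
    _ = √2 * ‖z‖ := by rw [Real.sqrt_mul zero_le_two, Real.sqrt_sq (norm_nonneg z)]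

variable {ι : Type*} [Fintype ι]

/-- The hyperbolic linear form `x ↦ ∑ k, w k * x k` on `𝕌^ι`, as a function of its coefficients
`w`. -/
def hyperbolicForm : (ι → ℝ × ℝ) →+ C(ι → ℝ × ℝ, ℝ × ℝ) where
  toFun w := ⟨fun x => ∑ k, hyperbolicMul (w k) (x k), by unfold hyperbolicMul; fun_prop⟩
  map_zero' := by ext <;> simp [hyperbolicMul_zero_left]
  map_add' v w := by
    ext1 x
    simp only [ContinuousMap.coe_mk, ContinuousMap.add_apply, Pi.add_apply, hyperbolicMul_add_left,
      Finset.sum_add_distrib]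

lemma hyperbolicForm_single [DecidableEq ι] (k : ι) (c : ℝ × ℝ) (x : ι → ℝ × ℝ) :
    hyperbolicForm (Pi.single k c) x = hyperbolicMul c (x k) := by
  refine (Finset.sum_eq_single k (fun j _ hj => ?_) (by simp)).trans (by simp)
  simp [hj, hyperbolicMul_zero_left]

lemma exists_hyperbolicForm_fst_ne {x y : ι → ℝ × ℝ} (hxy : x ≠ y) :
    ∃ w, (hyperbolicForm w x).1 ≠ (hyperbolicForm w y).1 := by
  classical
  contrapose! hxy
  ext k
  · simpa [hyperbolicForm_single, hyperbolicMul] using hxy (Pi.single k (1, 0))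
  · simpa [hyperbolicForm_single, hyperbolicMul] using hxy (Pi.single k (0, 1))

lemma exists_hyperbolicForm_snd_ne {x y : ι → ℝ × ℝ} (hxy : x ≠ y) :
    ∃ w, (hyperbolicForm w x).2 ≠ (hyperbolicForm w y).2 := by
  classical
  contrapose! hxy
  ext k
  · simpa [hyperbolicForm_single, hyperbolicMul] using hxy (Pi.single k (0, 1))
  · simpa [hyperbolicForm_single, hyperbolicMul] using hxy (Pi.single k (1, 0))

/-- The hidden neuron with input weights `p.1` and bias `p.2`, restricted to `K ⊆ 𝕌^ι`. -/
def hyperbolicNeuron (σ : C(ℝ, ℝ)) (K : Set (ι → ℝ × ℝ)) (p : (ι → ℝ × ℝ) × (ℝ × ℝ)) :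
    C(K, ℝ × ℝ) :=
  splitNeuron σ ((hyperbolicForm p.1).restrict K) p.2

theorem topologicalClosure_span_hyperbolicNeuron_eq_top {σ : C(ℝ, ℝ)} (hσ : σ ~[atBot] Real.exp)
    (K : Set (ι → ℝ × ℝ)) [CompactSpace K] :
    (Submodule.span ℝ (Set.range (hyperbolicNeuron σ K))).topologicalClosure = ⊤ := by
  refine eq_top_of_splitNeuron_mem hσ
    (H := AddMonoidHom.mrange ((ContinuousMap.compAddMonoidHom' (.restrict K (.id _))).comp
      hyperbolicForm))
    (fun x y hxy => ?_) (fun x y hxy => ?_) (Submodule.isClosed_topologicalClosure _) ?_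
  · obtain ⟨w, hw⟩ := exists_hyperbolicForm_fst_ne (Subtype.coe_injective.ne hxy)
    exact ⟨_, ⟨w, rfl⟩, hw⟩
  · obtain ⟨w, hw⟩ := exists_hyperbolicForm_snd_ne (Subtype.coe_injective.ne hxy)
    exact ⟨_, ⟨w, rfl⟩, hw⟩
  · rintro _ ⟨w, rfl⟩ θ
    exact Submodule.le_topologicalClosure _ (Submodule.subset_span ⟨(w, θ), rfl⟩)

end Hyperbolic

lemma continuous_logisticSigmoid : Continuous logisticSigmoid :=
  continuous_const.div (by fun_prop) fun t => by positivity

lemma logisticSigmoid_isEquivalent_exp_atBot : logisticSigmoid ~[atBot] Real.exp := by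
  refine (isEquivalent_iff_tendsto_one (.of_forall Real.exp_ne_zero)).2 ?_
  have hquot : logisticSigmoid / Real.exp = fun t => (1 + Real.exp t)⁻¹ := by
    ext t
    simp only [Pi.div_apply, logisticSigmoid, Real.exp_neg]
    field_simp
    ring
  have hlim := (Real.tendsto_exp_atBot.const_add 1).inv₀ (by norm_num)
  simpa only [hquot, add_zero, inv_one] using hlim

theorem universal_approximation_hyperbolic_general {ι : Type*} [Fintype ι] {σ : ℝ → ℝ}
    (hσ : Continuous σ) (hσexp : σ ~[atBot] Real.exp) {K : Set (ι → ℝ × ℝ)} (hK : IsCompact K)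
    {f : (ι → ℝ × ℝ) → ℝ × ℝ} (hf : ContinuousOn f K) {ε : ℝ} (hε : 0 < ε) :
    ∃ (M : ℕ) (a : Fin M → ℝ) (θ : Fin M → ℝ × ℝ) (y : Fin M → ι → ℝ × ℝ),
      ∀ x ∈ K, hyperbolicAbs (f x - ∑ i, a i •
        Prod.map σ σ ((∑ k, hyperbolicMul (y i k) (x k)) + θ i)) < ε := by
  have : CompactSpace K := isCompact_iff_compactSpace.1 hK
  let F : C(K, ℝ × ℝ) := ⟨K.domRestrict f, hf.domRestrict⟩
  have hF : F ∈ (Submodule.span ℝ (Set.range (hyperbolicNeuron ⟨σ, hσ⟩ K))).topologicalClosure :=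
    Submodule.eq_top_iff'.1 (topologicalClosure_span_hyperbolicNeuron_eq_top hσexp K) F
  obtain ⟨G, hG, hFG⟩ := Metric.mem_closure_iff.1 hF (ε / √2) (by positivity)
  obtain ⟨M, a, v, rfl⟩ := Submodule.mem_span_set'.1 hG
  choose p hp using fun i => (v i).2
  refine ⟨M, a, fun i => (p i).2, fun i => (p i).1, fun x hx => ?_⟩
  have hdist := (ContinuousMap.dist_apply_le_dist (⟨x, hx⟩ : K)).trans_lt hFG
  simp only [dist_eq_norm, ContinuousMap.sum_apply, ← hp] at hdist
  calc hyperbolicAbs _ ≤ √2 * _ := hyperbolicAbs_le_sqrt_two_mul_norm _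
    _ < ε := (lt_div_iff₀' (by positivity)).1 hdist

/-- Single-hidden-layer hyperbolic-valued MLPs with split
sigmoid activation are universal approximators of continuous hyperbolic-valued
functions on compact subsets of `𝕌^N`, with respect to the Euclidean norm on
`𝕌 ≅ ℝ²`. -/
theorem universal_approximation_hyperbolic {N : ℕ} (K : Set (Fin N → ℝ × ℝ))
    (hK : IsCompact K) (f : (Fin N → ℝ × ℝ) → ℝ × ℝ) (hf : ContinuousOn f K)
    (ε : ℝ) (hε : 0 < ε) :
    ∃ (M : ℕ) (α θ : Fin M → ℝ × ℝ) (y : Fin M → Fin N → ℝ × ℝ),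
      ∀ x ∈ K,
        hyperbolicAbs (f x - ∑ i : Fin M,
          hyperbolicMul (α i)
            (splitSigmoidU ((∑ k : Fin N, hyperbolicMul (y i k) (x k)) + θ i)))
          < ε := by
  obtain ⟨M, a, θ, y, h⟩ := universal_approximation_hyperbolic_general
    continuous_logisticSigmoid logisticSigmoid_isEquivalent_exp_atBot hK hf hε
  exact ⟨M, fun i => (a i, 0), θ, y, by simpa only [hyperbolicMul_real_left] using! h⟩
end
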